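/- arXiv:2012.02676 — 6 statements merged into one kernel-verified Lean document; each statement's English description precedes it below -/
import Mathlib

section
/- Let q ∈ ℝ^r with q_t ≤ 0 for every coordinate t. Then for every vector v ∈ ℝ^r with v ≥ 0 entrywise and ‖v‖₂ = 1, one has qᵀv ≤ max_t q_t. Consequently, a standard basis vector e(t*) with q_{t*} = max_t q_t maximizes qᵀv over the set {v ∈ ℝ^r : v ≥ 0 entrywise, ‖v‖₂ = 1, card(v) ≤ k} for any k ≥ 1. -/
/-- The number of nonzero entries of a vector `v ∈ ℝ^r`. -/
noncomputable def card {r : ℕ} (v : EuclideanSpace ℝ (Fin r)) : ℕ :=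
  {t | v t ≠ 0}.ncard

/-! Since `q ≤ max q ≤ 0` and `v ≥ 0`, we have `qᵀv ≤ (max q) · ‖v‖₁`. As `‖v‖₁ ≥ ‖v‖₂ = 1` and
`max q ≤ 0`, the right-hand side is at most `max q`, the value of `qᵀv` at `v = e(t*)`. -/

section PiLp

variable {ι : Type*} [Fintype ι] {p : ENNReal} [Fact (1 ≤ p)]

lemma piLp_norm_le_sum_norm {E : ι → Type*} [∀ i, SeminormedAddCommGroup (E i)] (v : PiLp p E) :
    ‖v‖ ≤ ∑ i, ‖v i‖ := by
  classical
  have sum_single : ∑ i, PiLp.single p i (v i) = v := by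
    ext j
    simp
  calc ‖v‖ = ‖∑ i, PiLp.single p i (v i)‖ := by rw [sum_single]
    _ ≤ ∑ i, ‖PiLp.single p i (v i)‖ := norm_sum_le _ _
    _ = ∑ i, ‖v i‖ := by simp

lemma sum_mul_le_mul_norm_of_nonpos {q : ι → ℝ} {c : ℝ} (hqc : ∀ i, q i ≤ c) (hc : c ≤ 0)
    {v : PiLp p fun _ : ι => ℝ} (hv : ∀ i, 0 ≤ v i) :
    ∑ i, q i * v i ≤ c * ‖v‖ := by
  have norm_le_sum : ‖v‖ ≤ ∑ i, v i := by
    simpa only [Real.norm_of_nonneg (hv _)] using piLp_norm_le_sum_norm v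
  calc ∑ i, q i * v i ≤ ∑ i, c * v i :=
        Finset.sum_le_sum fun i _ => mul_le_mul_of_nonneg_right (hqc i) (hv i)
    _ = c * ∑ i, v i := (Finset.mul_sum _ _ _).symm
    _ ≤ c * ‖v‖ := mul_le_mul_of_nonpos_left norm_le_sum hc

end PiLp

lemma card_single_le_one {r : ℕ} (t : Fin r) (a : ℝ) : card (EuclideanSpace.single t a) ≤ 1 := by
  have support_subset : {s | EuclideanSpace.single t a s ≠ 0} ⊆ {t} :=
    Pi.support_single_subset
  simpa only [card, Set.ncard_singleton] using Set.ncard_le_ncard support_subset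

/-- If every coordinate of `q` is nonpositive, then for every entrywise
nonnegative unit vector `v`, `qᵀv ≤ max_t q_t`; consequently a standard basis vector
`e(t*)` at a maximal coordinate maximizes `qᵀv` over the feasible set
`{v : v ≥ 0, ‖v‖ = 1, card v ≤ k}` for any `k ≥ 1`. -/
theorem stmt_0 {r k : ℕ} (hr : 0 < r) (hk : 1 ≤ k)
    (q : EuclideanSpace ℝ (Fin r)) (hq : ∀ t, q t ≤ 0)
    (tstar : Fin r) (htstar : ∀ t, q t ≤ q tstar) :
    (∀ v : EuclideanSpace ℝ (Fin r), (∀ t, 0 ≤ v t) → ‖v‖ = 1 →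
      ∑ t, q t * v t ≤ q tstar) ∧
    ((∀ t, 0 ≤ (EuclideanSpace.single tstar (1 : ℝ)) t) ∧
      ‖(EuclideanSpace.single tstar (1 : ℝ))‖ = 1 ∧
      card (EuclideanSpace.single tstar (1 : ℝ)) ≤ k ∧
      ∀ v : EuclideanSpace ℝ (Fin r), (∀ t, 0 ≤ v t) → ‖v‖ = 1 → card v ≤ k →
        ∑ t, q t * v t ≤ ∑ t, q t * (EuclideanSpace.single tstar (1 : ℝ)) t) := by
  have value_le_max (v : EuclideanSpace ℝ (Fin r)) (hv : ∀ t, 0 ≤ v t) (hnorm : ‖v‖ = 1) :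
      ∑ t, q t * v t ≤ q tstar := by
    simpa only [hnorm, mul_one] using sum_mul_le_mul_norm_of_nonpos htstar (hq tstar) hv
  have single_nonneg : ∀ t, 0 ≤ (EuclideanSpace.single tstar (1 : ℝ)) t :=
    (Pi.single_nonneg (α := fun _ : Fin r => ℝ)).2 zero_le_one
  have value_single : ∑ t, q t * (EuclideanSpace.single tstar (1 : ℝ)) t = q tstar := by
    simp
  exact ⟨value_le_max, single_nonneg, by simp, (card_single_le_one tstar 1).trans hk,
    fun v hv hnorm _ => (value_le_max v hv hnorm).trans_eq value_single.symm⟩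
end

section
/- Let q ∈ ℝ^r have at least one strictly positive entry, let 1 ≤ k ≤ r, and let v* be any maximizer of qᵀv over the set {v ∈ ℝ^r : v ≥ 0 entrywise, ‖v‖₂ = 1, card(v) ≤ k}. If a coordinate t satisfies q_t < q_[k], where q_[k] denotes the k-th largest value among the entries of q, then v*_t = 0. -/
/-- The `k`-th largest entry (counted with multiplicity) of `q ∈ ℝ^r`:
the `(k-1)`-st element of the entries of `q` sorted in decreasing order. -/
noncomputable def kthLargest {r : ℕ} (q : EuclideanSpace ℝ (Fin r)) (k : ℕ) : ℝ :=
  ((Finset.univ.val.map fun t => q t).sort (· ≥ ·)).getD (k - 1) 0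

/-!
Exchanging two coordinates `s`, `t` of `v` lowers `qᵀv` by `(q t - q s) * (v t - v s)` and keeps `v`
feasible, so a maximizer is sorted like `q`. Hence if `q t < q_[k]` and `0 < v t`, then `v` is also
positive at the `k` or more coordinates whose `q`-entry is at least `q_[k]`, so it has more than `k`
nonzero entries.
-/

section Rearrangement

variable {ι R : Type*} [Fintype ι]

theorem sum_mul_comp_swap [DecidableEq ι] [Ring R] (f g : ι → R) (s t : ι) :
    ∑ i, f i * g (Equiv.swap s t i) = ∑ i, f i * g i - (f t - f s) * (g t - g s) := by
  rcases eq_or_ne s t with rfl | hst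
  · simp
  have hdiff : ∑ i, (f i * g i - f i * g (Equiv.swap s t i)) = (f t - f s) * (g t - g s) := by
    rw [Fintype.sum_eq_add s t hst fun i hi ↦ by
      rw [Equiv.swap_apply_of_ne_of_ne hi.1 hi.2, sub_self],
      Equiv.swap_apply_left, Equiv.swap_apply_right]
    noncomm_ring
  rw [← hdiff, Finset.sum_sub_distrib, sub_sub_cancel]

theorem monovary_of_sum_mul_comp_perm_le [Ring R] [LinearOrder R] [IsStrictOrderedRing R]
    {f g : ι → R} (h : ∀ σ : Equiv.Perm ι, ∑ i, f i * g (σ i) ≤ ∑ i, f i * g i) :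
    Monovary f g := by
  classical
  refine monovary_iff_forall_mul_nonneg.2 fun s t ↦ ?_
  simpa only [sum_mul_comp_swap, sub_le_self_iff] using h (Equiv.swap s t)

end Rearrangement

theorem succ_le_countP_getElem_le {α : Type*} [Preorder α] [DecidableLE α] {l : List α}
    (hl : l.SortedGE) {n : ℕ} (hn : n < l.length) : n + 1 ≤ l.countP (l[n] ≤ ·) := by
  have hprefix : ∀ a ∈ l.take (n + 1), l[n] ≤ a := by
    intro a ha
    obtain ⟨i, hi, rfl⟩ := List.mem_take_iff_getElem.1 ha
    exact hl.getElem_ge_getElem_of_le (by omega)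
  calc n + 1 = (l.take (n + 1)).length := by rw [List.length_take]; omega
    _ = (l.take (n + 1)).countP (l[n] ≤ ·) :=
      (List.countP_eq_length.2 fun a ha ↦ decide_eq_true (hprefix a ha)).symm
    _ ≤ l.countP (l[n] ≤ ·) := (List.take_sublist _ l).countP_le

theorem norm_toLp_comp_equiv {𝕜 ι ι' : Type*} [RCLike 𝕜] [Fintype ι] [Fintype ι']
    (v : EuclideanSpace 𝕜 ι) (e : ι' ≃ ι) : ‖WithLp.toLp 2 (v ∘ e)‖ = ‖v‖ :=
  (LinearIsometryEquiv.piLpCongrLeft 2 𝕜 𝕜 e.symm).norm_map v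

section SparseVectors

variable {r k : ℕ} {q v : EuclideanSpace ℝ (Fin r)}

theorem card_toLp_comp_perm (v : EuclideanSpace ℝ (Fin r)) (σ : Equiv.Perm (Fin r)) :
    card (WithLp.toLp 2 (v ∘ σ)) = card v :=
  congrArg ENat.toNat (Set.encard_preimage_of_bijective σ.bijective {t | v t ≠ 0})

theorem le_ncard_kthLargest_le (hk : 1 ≤ k) (hkr : k ≤ r) (q : EuclideanSpace ℝ (Fin r)) :
    k ≤ {s | kthLargest q k ≤ q s}.ncard := by
  set l := (Finset.univ.val.map fun t ↦ q t).sort (· ≥ ·) with hl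
  have hlt : k - 1 < l.length := by
    rw [hl, Multiset.length_sort, Multiset.card_map, Finset.card_val, Finset.card_fin]
    omega
  have hkth : kthLargest q k = l[k - 1] := List.getD_eq_getElem _ _ hlt
  have hsorted : l.SortedGE := (Multiset.pairwise_sort _ _).sortedGE
  calc k = k - 1 + 1 := by omega
    _ ≤ l.countP (l[k - 1] ≤ ·) := succ_le_countP_getElem_le hsorted hlt
    _ = (Finset.univ.val.map fun t ↦ q t).countP (kthLargest q k ≤ ·) := by
      rw [← hkth, ← Multiset.coe_countP, hl, Multiset.sort_eq]
    _ = {s | kthLargest q k ≤ q s}.ncard := by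
      rw [Multiset.countP_map, Set.ncard_eq_toFinset_card', Set.toFinset_ofPred]
      rfl

theorem lt_card_of_monovary_of_lt_kthLargest (hk : 1 ≤ k) (hkr : k ≤ r) (hqv : Monovary q v)
    {t : Fin r} (hqt : q t < kthLargest q k) (hvt : 0 < v t) : k < card v := by
  have hsupport : insert t {s | kthLargest q k ≤ q s} ⊆ {s | v s ≠ 0} :=
    Set.insert_subset hvt.ne' fun s hs ↦ (hvt.trans_le (hqv.symm (hqt.trans_le hs))).ne'
  have htop : t ∉ {s | kthLargest q k ≤ q s} := fun h ↦ hqt.not_ge h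
  calc k < {s | kthLargest q k ≤ q s}.ncard + 1 :=
        Nat.lt_succ_of_le (le_ncard_kthLargest_le hk hkr q)
    _ = (insert t {s | kthLargest q k ≤ q s}).ncard :=
      (Set.ncard_insert_of_notMem htop).symm
    _ ≤ card v := Set.ncard_le_ncard hsupport

theorem stmt_2_general (hk : 1 ≤ k) (hkr : k ≤ r) (hv : ∀ t, 0 ≤ v t) (hcard : card v ≤ k)
    (hmax : ∀ σ : Equiv.Perm (Fin r), ∑ t, q t * v (σ t) ≤ ∑ t, q t * v t) :
    ∀ t, q t < kthLargest q k → v t = 0 := by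
  intro t hqt
  by_contra hvt
  have hqv : Monovary q v := monovary_of_sum_mul_comp_perm_le hmax
  have hvt_pos : 0 < v t := (hv t).lt_of_ne' hvt
  exact (lt_card_of_monovary_of_lt_kthLargest hk hkr hqv hqt hvt_pos).not_ge hcard

end SparseVectors

/-- If `q` has a strictly positive entry, `1 ≤ k ≤ r`, and `v*` maximizes
`qᵀv` over `{v : v ≥ 0, ‖v‖ = 1, card v ≤ k}`, then `v*_t = 0` at every coordinate `t`
with `q_t < q_[k]`, where `q_[k]` is the `k`-th largest entry of `q`. -/
theorem stmt_2 {r k : ℕ} (hk : 1 ≤ k) (hkr : k ≤ r)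
    (q : EuclideanSpace ℝ (Fin r)) (hq : ∃ t, 0 < q t)
    (vstar : EuclideanSpace ℝ (Fin r))
    (hfeas : (∀ t, 0 ≤ vstar t) ∧ ‖vstar‖ = 1 ∧ card vstar ≤ k)
    (hmax : ∀ v : EuclideanSpace ℝ (Fin r),
      (∀ t, 0 ≤ v t) → ‖v‖ = 1 → card v ≤ k →
      ∑ t, q t * v t ≤ ∑ t, q t * vstar t) :
    ∀ t, q t < kthLargest q k → vstar t = 0 :=
  stmt_2_general hk hkr hfeas.1 hfeas.2.2 fun σ ↦
    hmax (WithLp.toLp 2 (vstar ∘ σ)) (fun t ↦ hfeas.1 (σ t))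
      ((norm_toLp_comp_equiv vstar σ).trans hfeas.2.1)
      ((card_toLp_comp_perm vstar σ).trans_le hfeas.2.2)
end

section
/- Let Ω ⊆ ℝ^d be a nonempty closed set, let x, q ∈ ℝ^d, and let α > 1 be a scalar. Suppose y₁ ∈ Ω minimizes ‖y − (x + q)‖₂ over y ∈ Ω, and y_α ∈ Ω minimizes ‖y − (x + αq)‖₂ over y ∈ Ω. Then qᵀ(y_α − y₁) ≥ 0. -/
/-! Minimality of `p` at `z` and of `r` at `w` bounds two differences of squared distances below by
zero. In their sum the terms quadratic in `p` and `r` cancel, leaving `2⟪w - z, r - p⟫`, so metric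
projection is monotone. Along a ray, `w - z` is a positive multiple of the direction `q`. -/

section MetricProjection

open scoped RealInnerProductSpace

variable {E : Type*} [SeminormedAddCommGroup E] [InnerProductSpace ℝ E]

theorem two_mul_inner_sub_sub_eq_norm_sub_sq (z w p r : E) :
    2 * ⟪w - z, r - p⟫ =
      (‖r - z‖ ^ 2 - ‖p - z‖ ^ 2) + (‖p - w‖ ^ 2 - ‖r - w‖ ^ 2) := by
  simp only [norm_sub_sq_real, inner_sub_left, inner_sub_right, real_inner_comm z,
    real_inner_comm w]
  ring

theorem inner_sub_sub_nonneg_of_isMinOn_norm_sub {Ω : Set E} {z w p r : E}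
    (hp : p ∈ Ω) (hpz : IsMinOn (‖· - z‖) Ω p) (hr : r ∈ Ω) (hrw : IsMinOn (‖· - w‖) Ω r) :
    0 ≤ ⟪w - z, r - p⟫ := by
  have hz : ‖p - z‖ ^ 2 ≤ ‖r - z‖ ^ 2 := pow_le_pow_left₀ (norm_nonneg _) (hpz hr) 2
  have hw : ‖r - w‖ ^ 2 ≤ ‖p - w‖ ^ 2 := pow_le_pow_left₀ (norm_nonneg _) (hrw hp) 2
  linarith [two_mul_inner_sub_sub_eq_norm_sub_sq z w p r]

theorem stmt_5_general {Ω : Set E} (x q : E) {α : ℝ} (hα : 1 < α) {y₁ yα : E}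
    (hy₁ : y₁ ∈ Ω) (hy₁min : IsMinOn (‖· - (x + q)‖) Ω y₁)
    (hyα : yα ∈ Ω) (hyαmin : IsMinOn (‖· - (x + α • q)‖) Ω yα) :
    0 ≤ ⟪q, yα - y₁⟫ := by
  have displacement : x + α • q - (x + q) = (α - 1) • q := by module
  have scaled_nonneg : 0 ≤ (α - 1) * ⟪q, yα - y₁⟫ := by
    simpa only [displacement, real_inner_smul_left] using
      inner_sub_sub_nonneg_of_isMinOn_norm_sub hy₁ hy₁min hyα hyαmin
  exact nonneg_of_mul_nonneg_right scaled_nonneg (sub_pos.2 hα)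

end MetricProjection

/-- Lemma 1 of the paper: For a nonempty closed set `Ω ⊆ ℝ^d`, points
`x, q ∈ ℝ^d` and a scalar `α > 1`, if `y₁` is a projection of `x + q` onto `Ω` and `y_α`
is a projection of `x + αq` onto `Ω`, then `qᵀ(y_α − y₁) ≥ 0`. -/
theorem stmt_5 {d : ℕ} (Ω : Set (EuclideanSpace ℝ (Fin d)))
    (hΩclosed : IsClosed Ω) (hΩne : Ω.Nonempty)
    (x q : EuclideanSpace ℝ (Fin d)) (α : ℝ) (hα : 1 < α)
    (y₁ : EuclideanSpace ℝ (Fin d)) (hy₁ : y₁ ∈ Ω)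
    (hy₁min : ∀ y ∈ Ω, ‖y₁ - (x + q)‖ ≤ ‖y - (x + q)‖)
    (yα : EuclideanSpace ℝ (Fin d)) (hyα : yα ∈ Ω)
    (hyαmin : ∀ y ∈ Ω, ‖yα - (x + α • q)‖ ≤ ‖y - (x + α • q)‖) :
    0 ≤ ∑ t, q t * (yα t - y₁ t) := by
  simpa only [PiLp.inner_apply, Real.inner_apply, PiLp.sub_apply] using
    stmt_5_general x q hα hy₁ hy₁min hyα hyαmin
end

section
/- Let Ω be a nonempty closed subset of the unit sphere {u ∈ ℝ^d : ‖u‖₂ = 1}, let v ∈ Ω, let q ∈ ℝ^d, let v⁺ ∈ Ω be a maximizer of qᵀu over u ∈ Ω, and let y ∈ Ω be any minimizer of ‖u − (v + q)‖₂ over u ∈ Ω. Then ‖y − v‖₂² ≤ 2 qᵀ(v⁺ − v). -/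
/-!
Since `y` is a point of `Ω` nearest to `v + q` and `v ∈ Ω`, we have `‖(y - v) - q‖ ≤ ‖q‖`.
Expanding the square turns this into `‖y - v‖² ≤ 2⟪q, y - v⟫`, and `⟪q, y⟫ ≤ ⟪q, v⁺⟫` because `y`
competes with `v⁺` in the linear maximization over `Ω`.
-/

section InnerProductSpace

open scoped RealInnerProductSpace

variable {E : Type*} [NormedAddCommGroup E] [InnerProductSpace ℝ E]

theorem norm_sub_le_norm_right_iff_norm_sq_le_two_mul_inner {x q : E} :
    ‖x - q‖ ≤ ‖q‖ ↔ ‖x‖ ^ 2 ≤ 2 * ⟪q, x⟫ := by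
  rw [← sq_le_sq₀ (norm_nonneg _) (norm_nonneg _), norm_sub_sq_real, real_inner_comm]
  constructor <;> intro h <;> linarith

theorem norm_sub_sq_le_two_mul_inner_of_isMinOn {Ω : Set E} {v q y : E} (hv : v ∈ Ω)
    (hymin : IsMinOn (fun u ↦ ‖u - (v + q)‖) Ω y) :
    ‖y - v‖ ^ 2 ≤ 2 * ⟪q, y - v⟫ := by
  rw [← norm_sub_le_norm_right_iff_norm_sq_le_two_mul_inner]
  simpa only [sub_add_cancel_left, norm_neg, sub_sub] using isMinOn_iff.mp hymin v hv

theorem stmt_8_general {Ω : Set E} {v q vplus y : E} (hv : v ∈ Ω)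
    (hvplusmax : IsMaxOn (fun u ↦ ⟪q, u⟫) Ω vplus) (hy : y ∈ Ω)
    (hymin : IsMinOn (fun u ↦ ‖u - (v + q)‖) Ω y) :
    ‖y - v‖ ^ 2 ≤ 2 * ⟪q, vplus - v⟫ :=
  calc
    ‖y - v‖ ^ 2 ≤ 2 * ⟪q, y - v⟫ := norm_sub_sq_le_two_mul_inner_of_isMinOn hv hymin
    _ ≤ 2 * ⟪q, vplus - v⟫ := by
      rw [inner_sub_right, inner_sub_right]
      gcongr
      exact hvplusmax hy

theorem euclideanSpace_real_inner_eq_sum {ι : Type*} [Fintype ι] (x y : EuclideanSpace ℝ ι) :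
    ⟪x, y⟫ = ∑ i, x i * y i := by
  simp only [PiLp.inner_apply, Real.inner_apply]

end InnerProductSpace

/-- Let `Ω` be a nonempty closed subset of the unit sphere of `ℝ^d`,
`v ∈ Ω`, `q ∈ ℝ^d`, `v⁺ ∈ Ω` a maximizer of `qᵀu` over `Ω`, and `y` any projection of
`v + q` onto `Ω`. Then `‖y − v‖² ≤ 2 qᵀ(v⁺ − v)`. -/
theorem stmt_8 {d : ℕ} (Ω : Set (EuclideanSpace ℝ (Fin d)))
    (hΩclosed : IsClosed Ω) (hΩne : Ω.Nonempty)
    (hΩsphere : ∀ u ∈ Ω, ‖u‖ = 1)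
    (v : EuclideanSpace ℝ (Fin d)) (hv : v ∈ Ω)
    (q : EuclideanSpace ℝ (Fin d))
    (vplus : EuclideanSpace ℝ (Fin d)) (hvplus : vplus ∈ Ω)
    (hvplusmax : ∀ u ∈ Ω, ∑ t, q t * u t ≤ ∑ t, q t * vplus t)
    (y : EuclideanSpace ℝ (Fin d)) (hy : y ∈ Ω)
    (hymin : ∀ u ∈ Ω, ‖y - (v + q)‖ ≤ ‖u - (v + q)‖) :
    ‖y - v‖ ^ 2 ≤ 2 * ∑ t, q t * (vplus t - v t) := by
  simp only [← euclideanSpace_real_inner_eq_sum, ← PiLp.sub_apply] at hvplusmax ⊢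
  exact stmt_8_general hv hvplusmax hy hymin
end

section
/- Let n, r, k be positive integers with k ≤ r, let b ∈ ℝ^{n×n} be symmetric, and let m > 0. Let Q(V) = (1/2m) Σ_{i,j} b_{ij} ⟨vᵢ, vⱼ⟩ and Ωᵢ = {v ∈ ℝ^r : v ≥ 0 entrywise, ‖v‖₂ = 1, card(v) ≤ k}. Fix a feasible V (each vᵢ ∈ Ωᵢ). For each i let gᵢ = (1/m) Σ_{j≠i} b_{ij} vⱼ, let V^{(i)} denote V with block i replaced by any maximizer vᵢ⁺ of ⟨gᵢ, u⟩ over u ∈ Ωᵢ, and let yᵢ ∈ Ωᵢ be any minimizer of ‖u − (vᵢ + gᵢ)‖₂ over u ∈ Ωᵢ. Then Σ_{i=1}^n ‖yᵢ − vᵢ‖₂² ≤ 2 Σ_{i=1}^n (Q(V^{(i)}) − Q(V)). -/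
/-- The per-block feasible set `Ωᵢ = {v ∈ ℝ^r : v ≥ 0, ‖v‖ = 1, card v ≤ k}`. -/
def feas (r k : ℕ) : Set (EuclideanSpace ℝ (Fin r)) :=
  {v | (∀ t, 0 ≤ v t) ∧ ‖v‖ = 1 ∧ card v ≤ k}

/-- The generalized modularity objective `Q(V) = (1/2m) Σ_{i,j} b_{ij} ⟨vᵢ, vⱼ⟩`. -/
noncomputable def Qfun {n r : ℕ} (b : Fin n → Fin n → ℝ) (m : ℝ)
    (V : Fin n → EuclideanSpace ℝ (Fin r)) : ℝ :=
  (1 / (2 * m)) * ∑ i, ∑ j, b i j * ∑ t, V i t * V j t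

/-- The block gradient `gᵢ = (1/m) Σ_{j≠i} b_{ij} vⱼ` of `Q` with respect to block `i`. -/
noncomputable def gradBlock {n r : ℕ} (b : Fin n → Fin n → ℝ) (m : ℝ)
    (V : Fin n → EuclideanSpace ℝ (Fin r)) (i : Fin n) : EuclideanSpace ℝ (Fin r) :=
  (1 / m) • ∑ j ∈ Finset.univ.erase i, b i j • V j

/-! Write the objective as `½ Σ cᵢⱼ ⟨vᵢ, vⱼ⟩` with `c = b / m`. As a function of one block `u` it is
affine, `⟨gᵢ, u⟩ + const`, up to the diagonal term `½ cᵢᵢ ‖u‖²`, which is constant on a sphere;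
so replacing `vᵢ` by `vᵢ⁺` gains exactly `⟨gᵢ, vᵢ⁺ - vᵢ⟩`. On the other hand `vᵢ` competes with `yᵢ`
for the distance to `vᵢ + gᵢ`, and expanding `‖(yᵢ - vᵢ) - gᵢ‖² ≤ ‖gᵢ‖²` gives
`‖yᵢ - vᵢ‖² ≤ 2 ⟨gᵢ, yᵢ - vᵢ⟩ ≤ 2 ⟨gᵢ, vᵢ⁺ - vᵢ⟩`. -/

section PairEnergy

open Finset Function

variable {ι E : Type*} [NormedAddCommGroup E] [InnerProductSpace ℝ E]

lemma norm_sub_sq_le_two_mul_inner {x y g : E} (h : ‖y - (x + g)‖ ≤ ‖g‖) :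
    ‖y - x‖ ^ 2 ≤ 2 * inner ℝ g (y - x) := by
  have expansion : ‖y - (x + g)‖ ^ 2 = ‖y - x‖ ^ 2 - 2 * inner ℝ g (y - x) + ‖g‖ ^ 2 := by
    rw [← sub_sub, norm_sub_sq_real, real_inner_comm]
  have square : ‖y - (x + g)‖ ^ 2 ≤ ‖g‖ ^ 2 := by gcongr
  linarith

variable [Fintype ι]

/-- The pairwise interaction energy `½ Σ_{i,j} cᵢⱼ ⟨vᵢ, vⱼ⟩` of a family of vectors; the diagonal
terms are included. It is `Qfun b m` for `c = b / m`. -/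
noncomputable def pairEnergy (c : Matrix ι ι ℝ) (V : ι → E) : ℝ :=
  (1 / 2) * ∑ i, ∑ j, c i j * inner ℝ (V i) (V j)

variable [DecidableEq ι]

/-- The field `Σ_{j ≠ i} cᵢⱼ vⱼ` that the other vectors exert on block `i`: for symmetric `c`, the
gradient of `pairEnergy c` in that block without its diagonal part `cᵢᵢ vᵢ`. -/
noncomputable def localField (c : Matrix ι ι ℝ) (V : ι → E) (i : ι) : E :=
  ∑ j ∈ univ.erase i, c i j • V j

lemma inner_localField (c : Matrix ι ι ℝ) (V : ι → E) (i : ι) (u : E) :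
    inner ℝ (localField c V i) u = ∑ j ∈ univ.erase i, c i j * inner ℝ (V j) u := by
  simp only [localField, sum_inner, real_inner_smul_left]

lemma pairEnergy_eq_add_sum_erase {c : Matrix ι ι ℝ} (hc : c.IsSymm) (V : ι → E) (i : ι) :
    pairEnergy c V = inner ℝ (localField c V i) (V i) + c i i / 2 * ‖V i‖ ^ 2 +
      (1 / 2) * ∑ j ∈ univ.erase i, ∑ l ∈ univ.erase i, c j l * inner ℝ (V j) (V l) := by
  have row : ∑ l ∈ univ.erase i, c i l * inner ℝ (V i) (V l) =
      inner ℝ (localField c V i) (V i) := by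
    rw [inner_localField]
    exact sum_congr rfl fun l _ => by rw [real_inner_comm]
  have column : ∑ j ∈ univ.erase i, c j i * inner ℝ (V j) (V i) =
      inner ℝ (localField c V i) (V i) := by
    simp only [inner_localField, hc.apply i]
  simp only [pairEnergy, ← add_sum_erase univ _ (mem_univ i), sum_add_distrib, row, column,
    real_inner_self_eq_norm_sq]
  ring

lemma pairEnergy_update_sub {c : Matrix ι ι ℝ} (hc : c.IsSymm) (V : ι → E) (i : ι) (u : E) :
    pairEnergy c (update V i u) - pairEnergy c V =
      inner ℝ (localField c V i) (u - V i) + c i i / 2 * (‖u‖ ^ 2 - ‖V i‖ ^ 2) := by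
  have off_block : ∀ j ∈ univ.erase i, update V i u j = V j := fun j hj =>
    update_of_ne (ne_of_mem_erase hj) u V
  have field : localField c (update V i u) i = localField c V i :=
    sum_congr rfl fun j hj => by rw [off_block j hj]
  have rest : ∑ j ∈ univ.erase i, ∑ l ∈ univ.erase i,
        c j l * inner ℝ (update V i u j) (update V i u l) =
      ∑ j ∈ univ.erase i, ∑ l ∈ univ.erase i, c j l * inner ℝ (V j) (V l) :=
    sum_congr rfl fun j hj => sum_congr rfl fun l hl => by rw [off_block j hj, off_block l hl]
  rw [pairEnergy_eq_add_sum_erase hc (update V i u) i, pairEnergy_eq_add_sum_erase hc V i, field,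
    rest, update_self, inner_sub_right]
  ring

lemma pairEnergy_update_sub_of_norm_eq {c : Matrix ι ι ℝ} (hc : c.IsSymm) (V : ι → E) {i : ι}
    {u : E} (hu : ‖u‖ = ‖V i‖) :
    pairEnergy c (update V i u) - pairEnergy c V = inner ℝ (localField c V i) (u - V i) := by
  rw [pairEnergy_update_sub hc, hu, sub_self, mul_zero, add_zero]

theorem stmt_15_general {c : Matrix ι ι ℝ} (hc : c.IsSymm) {S : ι → Set E} {ρ : ι → ℝ}
    (hS : ∀ i, S i ⊆ Metric.sphere 0 (ρ i)) {V W Y : ι → E} (hV : ∀ i, V i ∈ S i)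
    (hW : ∀ i, W i ∈ S i) (hY : ∀ i, Y i ∈ S i)
    (hWmax : ∀ i, IsMaxOn (fun u => inner ℝ (localField c V i) u) (S i) (W i))
    (hYmin : ∀ i, IsMinOn (fun u => ‖u - (V i + localField c V i)‖) (S i) (Y i)) :
    ∑ i, ‖Y i - V i‖ ^ 2 ≤ 2 * ∑ i, (pairEnergy c (update V i (W i)) - pairEnergy c V) := by
  rw [mul_sum]
  refine sum_le_sum fun i _ => ?_
  have norm_eq : ‖W i‖ = ‖V i‖ := by
    rw [mem_sphere_zero_iff_norm.1 (hS i (hW i)), mem_sphere_zero_iff_norm.1 (hS i (hV i))]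
  have dist_le : ‖Y i - (V i + localField c V i)‖ ≤ ‖localField c V i‖ := by
    simpa only [sub_add_cancel_left, norm_neg] using isMinOn_iff.1 (hYmin i) (V i) (hV i)
  calc ‖Y i - V i‖ ^ 2
      ≤ 2 * inner ℝ (localField c V i) (Y i - V i) := norm_sub_sq_le_two_mul_inner dist_le
    _ ≤ 2 * inner ℝ (localField c V i) (W i - V i) := by
      simp only [inner_sub_right]
      gcongr
      exact hWmax i (hY i)
    _ = 2 * (pairEnergy c (update V i (W i)) - pairEnergy c V) := by
      rw [pairEnergy_update_sub_of_norm_eq hc V norm_eq]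

end PairEnergy

section Modularity

variable {n r : ℕ}

lemma sum_mul_eq_inner {κ : Type*} [Fintype κ] (x z : EuclideanSpace ℝ κ) :
    ∑ t, x t * z t = inner ℝ x z := by
  simp only [PiLp.inner_apply, Real.inner_apply]

lemma Qfun_eq_pairEnergy (b : Fin n → Fin n → ℝ) (m : ℝ)
    (V : Fin n → EuclideanSpace ℝ (Fin r)) :
    Qfun b m V = pairEnergy (m⁻¹ • Matrix.of b) V := by
  simp only [Qfun, pairEnergy, sum_mul_eq_inner, Matrix.smul_apply, Matrix.of_apply,
    smul_eq_mul, mul_assoc, ← Finset.mul_sum]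
  ring

lemma gradBlock_eq_localField (b : Fin n → Fin n → ℝ) (m : ℝ)
    (V : Fin n → EuclideanSpace ℝ (Fin r)) (i : Fin n) :
    gradBlock b m V i = localField (m⁻¹ • Matrix.of b) V i := by
  simp only [gradBlock, localField, Finset.smul_sum, smul_smul, one_div, Matrix.smul_apply,
    Matrix.of_apply, smul_eq_mul]

lemma feas_subset_sphere {k : ℕ} : feas r k ⊆ Metric.sphere 0 1 := fun _ hv =>
  mem_sphere_zero_iff_norm.2 hv.2.1

end Modularity

/-- deterministic one-step progress bound of Theorem 1: With `V` feasible,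
`vᵢ⁺` any maximizer of `⟨gᵢ, u⟩` over `Ωᵢ`, `V^{(i)}` the configuration `V` with block `i`
replaced by `vᵢ⁺`, and `yᵢ` any projection of `vᵢ + gᵢ` onto `Ωᵢ`, one has
`Σᵢ ‖yᵢ − vᵢ‖² ≤ 2 Σᵢ (Q(V^{(i)}) − Q(V))`. -/
theorem stmt_15 {n r k : ℕ} (hn : 0 < n) (hr : 0 < r) (hk : 0 < k) (hkr : k ≤ r)
    (b : Fin n → Fin n → ℝ) (hb : ∀ i j, b i j = b j i) (m : ℝ) (hm : 0 < m)
    (V : Fin n → EuclideanSpace ℝ (Fin r)) (hfeas : ∀ i, V i ∈ feas r k)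
    (vplus : Fin n → EuclideanSpace ℝ (Fin r))
    (hvplusmem : ∀ i, vplus i ∈ feas r k)
    (hvplusmax : ∀ i, ∀ u ∈ feas r k,
      ∑ t, gradBlock b m V i t * u t ≤ ∑ t, gradBlock b m V i t * vplus i t)
    (y : Fin n → EuclideanSpace ℝ (Fin r))
    (hymem : ∀ i, y i ∈ feas r k)
    (hymin : ∀ i, ∀ u ∈ feas r k,
      ‖y i - (V i + gradBlock b m V i)‖ ≤ ‖u - (V i + gradBlock b m V i)‖) :
    ∑ i, ‖y i - V i‖ ^ 2 ≤
      2 * ∑ i, (Qfun b m (Function.update V i (vplus i)) - Qfun b m V) := by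
  simp only [gradBlock_eq_localField, sum_mul_eq_inner] at hvplusmax hymin
  simp only [Qfun_eq_pairEnergy]
  exact stmt_15_general ((Matrix.IsSymm.ext fun i j => hb j i).smul m⁻¹)
    (fun _ => feas_subset_sphere) hfeas hvplusmem hymem hvplusmax hymin
end

section
/- Let Ω ⊆ ℝ^d be a nonempty closed set, x, q ∈ ℝ^d, and α > 1. Suppose y₁ ∈ Ω minimizes ‖y − (x + q)‖₂ over Ω and y_α ∈ Ω minimizes ‖y − (x + αq)‖₂ over Ω. Then the following two inequalities hold: ‖y₁ − x‖₂² ≤ ‖y_α − x‖₂² − 2qᵀ(y_α − y₁) and ‖y_α − x‖₂² ≤ ‖y₁ − x‖₂² − 2αqᵀ(y₁ − y_α). -/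
section InnerProductSpace

open scoped RealInnerProductSpace

variable {E : Type*} [SeminormedAddCommGroup E] [InnerProductSpace ℝ E]

theorem norm_sub_le_norm_sub_iff_inner (a b v : E) :
    ‖a - v‖ ≤ ‖b - v‖ ↔ ‖a‖ ^ 2 ≤ ‖b‖ ^ 2 - 2 * ⟪v, b - a⟫ := by
  have sq_sub_sq : ‖b - v‖ ^ 2 - ‖a - v‖ ^ 2 = ‖b‖ ^ 2 - 2 * ⟪v, b - a⟫ - ‖a‖ ^ 2 := by
    rw [norm_sub_sq_real, norm_sub_sq_real, inner_sub_right, real_inner_comm v a,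
      real_inner_comm v b]
    ring
  rw [← sq_le_sq₀ (norm_nonneg _) (norm_nonneg _), ← sub_nonneg, sq_sub_sq, sub_nonneg]

theorem norm_sub_add_le_norm_sub_add_iff_inner (a b x v : E) :
    ‖a - (x + v)‖ ≤ ‖b - (x + v)‖ ↔ ‖a - x‖ ^ 2 ≤ ‖b - x‖ ^ 2 - 2 * ⟪v, b - a⟫ := by
  rw [← sub_sub, ← sub_sub, norm_sub_le_norm_sub_iff_inner, sub_sub_sub_cancel_right]

theorem stmt_18_general (Ω : Set E) (x q : E) (α : ℝ)
    (y₁ : E) (hy₁ : y₁ ∈ Ω) (hy₁min : ∀ y ∈ Ω, ‖y₁ - (x + q)‖ ≤ ‖y - (x + q)‖)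
    (yα : E) (hyα : yα ∈ Ω) (hyαmin : ∀ y ∈ Ω, ‖yα - (x + α • q)‖ ≤ ‖y - (x + α • q)‖) :
    ‖y₁ - x‖ ^ 2 ≤ ‖yα - x‖ ^ 2 - 2 * ⟪q, yα - y₁⟫ ∧
    ‖yα - x‖ ^ 2 ≤ ‖y₁ - x‖ ^ 2 - 2 * α * ⟪q, y₁ - yα⟫ := by
  constructor
  · exact (norm_sub_add_le_norm_sub_add_iff_inner y₁ yα x q).mp (hy₁min yα hyα)
  · rw [mul_assoc, ← real_inner_smul_left]
    exact (norm_sub_add_le_norm_sub_add_iff_inner yα y₁ x (α • q)).mp (hyαmin y₁ hy₁)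

end InnerProductSpace

/-- equations (18) and (19) of the paper: For a nonempty closed set
`Ω ⊆ ℝ^d`, points `x, q ∈ ℝ^d` and `α > 1`, if `y₁` is a projection of `x + q` onto `Ω`
and `y_α` is a projection of `x + αq` onto `Ω`, then
`‖y₁ − x‖² ≤ ‖y_α − x‖² − 2qᵀ(y_α − y₁)` and
`‖y_α − x‖² ≤ ‖y₁ − x‖² − 2αqᵀ(y₁ − y_α)`. -/
theorem stmt_18 {d : ℕ} (Ω : Set (EuclideanSpace ℝ (Fin d)))
    (hΩclosed : IsClosed Ω) (hΩne : Ω.Nonempty)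
    (x q : EuclideanSpace ℝ (Fin d)) (α : ℝ) (hα : 1 < α)
    (y₁ : EuclideanSpace ℝ (Fin d)) (hy₁ : y₁ ∈ Ω)
    (hy₁min : ∀ y ∈ Ω, ‖y₁ - (x + q)‖ ≤ ‖y - (x + q)‖)
    (yα : EuclideanSpace ℝ (Fin d)) (hyα : yα ∈ Ω)
    (hyαmin : ∀ y ∈ Ω, ‖yα - (x + α • q)‖ ≤ ‖y - (x + α • q)‖) :
    ‖y₁ - x‖ ^ 2 ≤ ‖yα - x‖ ^ 2 - 2 * ∑ t, q t * (yα t - y₁ t) ∧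
    ‖yα - x‖ ^ 2 ≤ ‖y₁ - x‖ ^ 2 - 2 * α * ∑ t, q t * (y₁ t - yα t) := by
  simpa only [PiLp.inner_apply, PiLp.sub_apply, Real.inner_apply] using
    stmt_18_general Ω x q α y₁ hy₁ hy₁min yα hyα hyαmin
end
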